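/- Let Ω ⊆ ℂ be a domain and let K and L be two Ω-convex compact subsets of Ω. If K ⊆ ℂ ∖ L̂ and L ⊆ ℂ ∖ K̂ (where K̂ and L̂ denote the polynomial hulls), then K ∪ L is Ω-convex. -/

import Mathlib

open Set Metric Bornology Filter

/-- A *hole* of `E` is a nonempty bounded connected component of `ℂ \ E`. -/
def IsHole (E C : Set ℂ) : Prop :=
  (∃ z ∈ Eᶜ, C = connectedComponentIn Eᶜ z) ∧ Bornology.IsBounded C

/-- A compact set `K` contained in an open set `Ω` is `Ω`-*convex* if every hole of `K`
contains a point of `ℂ \ Ω`. -/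
def OmegaConvex (Ω K : Set ℂ) : Prop :=
  ∀ C : Set ℂ, IsHole K C → (C ∩ Ωᶜ).Nonempty

/-- The *polynomial hull* of `K`: the union of `K` and all of its holes. -/
def polyHull (K : Set ℂ) : Set ℂ :=
  K ∪ {z | z ∈ Kᶜ ∧ Bornology.IsBounded (connectedComponentIn Kᶜ z)}

/-- A sequence of maps is *eventually injective* on `G`: for every compact `K ⊆ G`, the maps
are eventually injective on a neighbourhood of `K` in `G`. -/
def EventuallyInjective (G : Set ℂ) (φ : ℕ → ℂ → ℂ) : Prop :=
  ∀ K : Set ℂ, K ⊆ G → IsCompact K →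
    ∃ N : ℕ, ∀ n ≥ N, ∃ U : Set ℂ, IsOpen U ∧ K ⊆ U ∧ U ⊆ G ∧ Set.InjOn (φ n) U

/-- `f` is `(Φ, G, Ω)`-*universal*: the family `{f ∘ φ n : n ∈ ℕ}` is dense in `H(G)` for the
topology of locally uniform convergence, i.e. every `g` holomorphic on `G` can be approximated
uniformly on every compact subset of `G` by functions `f ∘ φ n`. -/
def UniversalFor (G : Set ℂ) (φ : ℕ → ℂ → ℂ) (f : ℂ → ℂ) : Prop :=
  ∀ g : ℂ → ℂ, DifferentiableOn ℂ g G →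
    ∀ K : Set ℂ, K ⊆ G → IsCompact K → ∀ ε : ℝ, 0 < ε →
      ∃ n : ℕ, ∀ z ∈ K, ‖f (φ n z) - g z‖ < ε

/-- `E` has no hole (for a domain: simple connectivity). -/
def HasNoHole (E : Set ℂ) : Prop := ¬ ∃ C : Set ℂ, IsHole E C

/-- A *Jordan curve*: the image of the unit circle under an injective continuous map. -/
def IsJordanCurve (C : Set ℂ) : Prop :=
  ∃ γ : ℂ → ℂ, ContinuousOn γ (Metric.sphere 0 1) ∧ Set.InjOn γ (Metric.sphere 0 1) ∧
    C = γ '' Metric.sphere 0 1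

/-- A *Jordan arc*: the image of `[0,1]` under an injective continuous map. -/
def IsJordanArc (C : Set ℂ) : Prop :=
  ∃ γ : ℝ → ℂ, ContinuousOn γ (Set.Icc 0 1) ∧ Set.InjOn γ (Set.Icc 0 1) ∧
    C = γ '' Set.Icc 0 1

/-- A compact set is *regular* if its boundary is a union of Jordan curves. -/
def RegularCompact (K : Set ℂ) : Prop :=
  ∃ 𝒞 : Set (Set ℂ), (∀ C ∈ 𝒞, IsJordanCurve C) ∧ frontier K = ⋃₀ 𝒞

/-- `K` is `Ω`-*connected*: it has no hole if `Ω` is simply connected, and has at least one hole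
if `Ω` is not simply connected. -/
def OmegaConnectedSet (Ω K : Set ℂ) : Prop :=
  (HasNoHole Ω → HasNoHole K) ∧ (¬ HasNoHole Ω → ∃ C : Set ℂ, IsHole K C)

/-- Membership in the family `M(Ω)` of nonempty compact subsets of `Ω` that are regular,
connected, `Ω`-connected and `Ω`-convex. -/
def MemM (Ω K : Set ℂ) : Prop :=
  K.Nonempty ∧ IsCompact K ∧ K ⊆ Ω ∧ RegularCompact K ∧ IsConnected K ∧
    OmegaConnectedSet Ω K ∧ OmegaConvex Ω K

/-- `f` is `(Φ, M)`-*universal*: for every `K ∈ M`, the restrictions of the `f ∘ φ n` to `K`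
are dense in `C(K)`. -/
def MUniversal (M : Set (Set ℂ)) (φ : ℕ → ℂ → ℂ) (f : ℂ → ℂ) : Prop :=
  ∀ K ∈ M, ∀ h : ℂ → ℂ, ContinuousOn h K → ∀ ε : ℝ, 0 < ε →
    ∃ n : ℕ, ∀ z ∈ K, ‖f (φ n z) - h z‖ < ε

/-!
If `K` and `L` are disjoint and `p` lies in the unbounded components of `ℂ \ K` and of `ℂ \ L`,
then `z - p` has a continuous logarithm on compact pieces of `K` and of `L`: move `p` to infinity
inside the component, where `z - p` is a small perturbation of a constant. The logarithms glue along
the disjoint closed sets, whereas `z - p` has no continuous logarithm on the boundary of a bounded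
set containing `p`. So the component of `p` in `ℂ \ (K ∪ L)` is unbounded as well. When neither set
meets the hull of the other, this makes every hole of `K ∪ L` a hole of `K` or of `L`.
-/

section Components

variable {X : Type*} [TopologicalSpace X] {F G : Set X} {x : X}

lemma frontier_connectedComponentIn_subset_compl [LocallyConnectedSpace X] (hF : IsOpen F) :
    frontier (connectedComponentIn F x) ⊆ Fᶜ := by
  intro y hy hyF
  rw [hF.connectedComponentIn.frontier_eq] at hy
  obtain ⟨z, hzy, hzx⟩ := mem_closure_iff.1 hy.1 _ (hF.connectedComponentIn (x := y))
    (mem_connectedComponentIn hyF)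
  refine hy.2 ?_
  rw [connectedComponentIn_eq hzx, ← connectedComponentIn_eq hzy]
  exact mem_connectedComponentIn hyF

lemma connectedComponentIn_eq_of_subset_of_subset (hGF : G ⊆ F) (hx : x ∈ G)
    (hFG : connectedComponentIn F x ⊆ G) : connectedComponentIn G x = connectedComponentIn F x :=
  (connectedComponentIn_mono x hGF).antisymm <|
    isPreconnected_connectedComponentIn.subset_connectedComponentIn
      (mem_connectedComponentIn (hGF hx)) hFG

lemma mem_of_not_isBounded_connectedComponentIn [Bornology X]
    (hub : ¬ IsBounded (connectedComponentIn F x)) : x ∈ F :=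
  connectedComponentIn_nonempty_iff.1 (nonempty_of_not_isBounded hub)

end Components

/-- `f` has a continuous branch of the logarithm on `s`. This is Eilenberg's device for detecting
whether a point `p` is separated from infinity by `s`, with `f z = z - p`. As `exp` omits `0`,
it forces `f` to have no zero on `s`. -/
def HasContinuousLogOn {X : Type*} [TopologicalSpace X] (f : X → ℂ) (s : Set X) : Prop :=
  ∃ g : X → ℂ, ContinuousOn g s ∧ EqOn (Complex.exp ∘ g) f s

section ContinuousLog

variable {X : Type*} [TopologicalSpace X] {f g : X → ℂ} {s t : Set X}

lemma HasContinuousLogOn.mono (hf : HasContinuousLogOn f t) (hst : s ⊆ t) :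
    HasContinuousLogOn f s :=
  let ⟨u, hu, hexp⟩ := hf
  ⟨u, hu.mono hst, hexp.mono hst⟩

lemma HasContinuousLogOn.congr (hf : HasContinuousLogOn f s) (hfg : EqOn f g s) :
    HasContinuousLogOn g s :=
  let ⟨u, hu, hexp⟩ := hf
  ⟨u, hu, hexp.trans hfg⟩

lemma hasContinuousLogOn_const {c : ℂ} (hc : c ≠ 0) : HasContinuousLogOn (fun _ : X ↦ c) s :=
  ⟨fun _ ↦ Complex.log c, continuousOn_const, fun _ _ ↦ Complex.exp_log hc⟩

lemma HasContinuousLogOn.of_mem_slitPlane (hf : ContinuousOn f s)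
    (hslit : ∀ x ∈ s, f x ∈ Complex.slitPlane) : HasContinuousLogOn f s :=
  ⟨fun x ↦ Complex.log (f x), hf.clog hslit,
    fun x hx ↦ Complex.exp_log (Complex.slitPlane_ne_zero (hslit x hx))⟩

lemma HasContinuousLogOn.mul (hf : HasContinuousLogOn f s) (hg : HasContinuousLogOn g s) :
    HasContinuousLogOn (fun x ↦ f x * g x) s := by
  obtain ⟨u, hu, hfu⟩ := hf
  obtain ⟨v, hv, hgv⟩ := hg
  exact ⟨fun x ↦ u x + v x, hu.add hv,
    fun x hx ↦ (Complex.exp_add _ _).trans (congrArg₂ _ (hfu hx) (hgv hx))⟩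

lemma HasContinuousLogOn.inv (hf : HasContinuousLogOn f s) :
    HasContinuousLogOn (fun x ↦ (f x)⁻¹) s := by
  obtain ⟨u, hu, hfu⟩ := hf
  exact ⟨fun x ↦ -u x, hu.neg, fun x hx ↦ (Complex.exp_neg _).trans (congrArg _ (hfu hx))⟩

lemma hasContinuousLogOn_iff_of_norm_sub_lt (hf : ContinuousOn f s) (hg : ContinuousOn g s)
    (hlt : ∀ x ∈ s, ‖f x - g x‖ < ‖g x‖) :
    HasContinuousLogOn f s ↔ HasContinuousLogOn g s := by
  have hg_ne : ∀ x ∈ s, g x ≠ 0 := fun x hx ↦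
    norm_pos_iff.1 ((norm_nonneg _).trans_lt (hlt x hx))
  have hslit : ∀ x ∈ s, f x / g x ∈ Complex.slitPlane := fun x hx ↦ by
    apply Complex.ball_one_subset_slitPlane
    rw [mem_ball, dist_eq_norm, div_sub_one (hg_ne x hx), norm_div,
      div_lt_one (norm_pos_iff.2 (hg_ne x hx))]
    exact hlt x hx
  have hf_ne : ∀ x ∈ s, f x ≠ 0 := fun x hx ↦
    (div_ne_zero_iff.1 (Complex.slitPlane_ne_zero (hslit x hx))).1
  have hlog : HasContinuousLogOn (fun x ↦ f x / g x) s := .of_mem_slitPlane (hf.div hg hg_ne) hslit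
  refine ⟨fun h ↦ (h.mul hlog.inv).congr fun x hx ↦ ?_, fun h ↦ (h.mul hlog).congr fun x hx ↦ ?_⟩
  · simp only [inv_div, mul_div_cancel₀ _ (hf_ne x hx)]
  · simp only [mul_div_cancel₀ _ (hg_ne x hx)]

lemma HasContinuousLogOn.union (hfs : HasContinuousLogOn f s) (hft : HasContinuousLogOn f t)
    (hs : IsClosed s) (ht : IsClosed t) (hst : Disjoint s t) : HasContinuousLogOn f (s ∪ t) := by
  classical
  obtain ⟨u, hu, hfu⟩ := hfs
  obtain ⟨v, hv, hfv⟩ := hft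
  have heq_u : EqOn (s.piecewise u v) u s := piecewise_eqOn s u v
  have heq_v : EqOn (s.piecewise u v) v t :=
    (piecewise_eqOn_compl s u v).mono hst.subset_compl_left
  refine ⟨s.piecewise u v, (hu.congr heq_u).union_of_isClosed (hv.congr heq_v) hs ht, ?_⟩
  exact ((heq_u.comp_left).trans hfu).union ((heq_v.comp_left).trans hfv)

lemma HasContinuousLogOn.exists_continuousMap_exp_eqOn [NormalSpace X]
    (hf : HasContinuousLogOn f s) (hs : IsClosed s) :
    ∃ u : C(X, ℂ), EqOn (Complex.exp ∘ u) f s := by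
  obtain ⟨v, hv, hfv⟩ := hf
  obtain ⟨u, hu⟩ := ContinuousMap.exists_restrict_eq hs ⟨s.domRestrict v, hv.domRestrict⟩
  have huv : EqOn u v s := fun x hx ↦ DFunLike.congr_fun hu ⟨x, hx⟩
  exact ⟨u, huv.comp_left.trans hfv⟩

lemma hasContinuousLogOn_univ_of_forall_ne_zero
    [SimplyConnectedSpace X] [LocallyPathConnectedSpace X]
    (hf : Continuous f) (hne : ∀ x, f x ≠ 0) : HasContinuousLogOn f univ := by
  obtain ⟨x₀⟩ : Nonempty X := inferInstance
  obtain ⟨u, ⟨-, hu⟩, -⟩ := Complex.isCoveringMapOn_exp.existsUnique_continuousMap_lifts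
    ⟨f, hf⟩ (Complex.exp_log (hne x₀)) hne
  exact ⟨u, u.continuous.continuousOn, fun x _ ↦ congrFun hu x⟩

end ContinuousLog

lemma not_hasContinuousLogOn_sub_sphere (p : ℂ) {R : ℝ} (hR : 0 ≤ R) :
    ¬ HasContinuousLogOn (· - p) (sphere p R) := by
  rintro ⟨g, hg, hexp⟩
  -- `exp ∘ h` is constant, hence so is `h`; but `g ∘ circleMap p R` is periodic and `t * I` is not.
  let h : ℝ → ℂ := fun t ↦ g (circleMap p R t) - t * Complex.I
  have hcont : Continuous h :=
    (hg.comp_continuous (continuous_circleMap p R) (circleMap_mem_sphere p hR)).sub (by fun_prop)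
  have hexp_h : ∀ t, Complex.exp (h t) = R := fun t ↦ by
    have : Complex.exp (g (circleMap p R t)) = R * Complex.exp (t * Complex.I) :=
      (hexp (circleMap_mem_sphere p hR t)).trans (add_sub_cancel_left _ _)
    rw [Complex.exp_sub, this, mul_div_cancel_right₀ _ (Complex.exp_ne_zero _)]
  have hperiod : h 0 = h (2 * Real.pi) :=
    Complex.isCoveringMap_exp.const_of_comp hcont (fun a b ↦ by simp only [hexp_h]) _ _
  have hshift : h (2 * Real.pi) = h 0 - 2 * Real.pi * Complex.I := by
    simp only [h, (periodic_circleMap p R).eq]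
    push_cast
    ring
  exact Complex.two_pi_I_ne_zero (sub_eq_self.1 (hshift.symm.trans hperiod.symm))

lemma not_hasContinuousLogOn_sub_frontier {U : Set ℂ} (hU : IsBounded U) {p : ℂ} (hp : p ∈ U) :
    ¬ HasContinuousLogOn (· - p) (frontier U) := by
  classical
  intro hlog
  obtain ⟨u, hu⟩ := hlog.exists_continuousMap_exp_eqOn isClosed_frontier
  let F : ℂ → ℂ := U.piecewise (Complex.exp ∘ u) (· - p)
  have hF_cont : Continuous F := Continuous.piecewise hu (by fun_prop) (by fun_prop)
  have hF_eq : EqOn F (· - p) Uᶜ := piecewise_eqOn_compl U _ _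
  have hF_ne : ∀ z, F z ≠ 0 := fun z ↦ by
    by_cases hz : z ∈ U
    · rw [show F z = Complex.exp (u z) from piecewise_eq_of_mem _ _ _ hz]
      exact Complex.exp_ne_zero _
    · rw [hF_eq hz]
      exact sub_ne_zero.2 fun h ↦ hz (h ▸ hp)
  have hF_log : HasContinuousLogOn F univ :=
    hasContinuousLogOn_univ_of_forall_ne_zero hF_cont hF_ne
  obtain ⟨R, hR, hUR⟩ := hU.subset_ball_lt 0 p
  have hsphere : sphere p R ⊆ Uᶜ := fun z hz hzU ↦ (mem_ball.1 (hUR hzU)).ne hz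
  exact not_hasContinuousLogOn_sub_sphere p hR.le
    ((hF_log.mono (subset_univ _)).congr (hF_eq.mono hsphere))

lemma hasContinuousLogOn_sub_iff_of_isPreconnected {A C : Set ℂ} (hA : IsClosed A)
    (hC : IsPreconnected C) (hCA : Disjoint C A) {p q : ℂ} (hp : p ∈ C) (hq : q ∈ C) :
    HasContinuousLogOn (· - p) A ↔ HasContinuousLogOn (· - q) A := by
  refine hC.induction₂ (fun x y ↦ HasContinuousLogOn (· - x) A ↔ HasContinuousLogOn (· - y) A)
    (fun x hx ↦ mem_nhdsWithin_of_mem_nhds ?_) (fun _ _ _ _ _ _ ↦ Iff.trans)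
    (fun _ _ _ _ ↦ Iff.symm) hp hq
  obtain ⟨r, hr, hball⟩ := isOpen_iff.1 hA.isOpen_compl x (disjoint_left.1 hCA hx)
  filter_upwards [ball_mem_nhds x hr] with y hy
  refine (hasContinuousLogOn_iff_of_norm_sub_lt (by fun_prop) (by fun_prop) fun z hz ↦ ?_).symm
  have hrz : r ≤ dist z x := not_lt.1 fun hzx ↦ hball hzx hz
  rw [sub_sub_sub_cancel_left, ← dist_eq_norm, ← dist_eq_norm]
  exact (mem_ball'.1 hy).trans_le hrz

lemma hasContinuousLogOn_sub_of_norm_lt {A : Set ℂ} {p : ℂ} (hA : ∀ z ∈ A, ‖z‖ < ‖p‖) :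
    HasContinuousLogOn (· - p) A := by
  rcases A.eq_empty_or_nonempty with rfl | ⟨a, ha⟩
  · exact ⟨id, continuousOn_empty _, eqOn_empty _ _⟩
  have hp : -p ≠ 0 := neg_ne_zero.2 (norm_pos_iff.1 ((norm_nonneg a).trans_lt (hA a ha)))
  refine (hasContinuousLogOn_iff_of_norm_sub_lt (by fun_prop) continuousOn_const fun z hz ↦ ?_).2
    (hasContinuousLogOn_const hp)
  simpa only [sub_neg_eq_add, sub_add_cancel, norm_neg] using hA z hz

lemma hasContinuousLogOn_sub_of_not_isBounded {A B : Set ℂ} (hA : IsCompact A) (hAB : A ⊆ B)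
    {p : ℂ} (hub : ¬ IsBounded (connectedComponentIn Bᶜ p)) : HasContinuousLogOn (· - p) A := by
  obtain ⟨R, hR⟩ := hA.isBounded.exists_norm_le
  obtain ⟨q, hq, hRq⟩ : ∃ q ∈ connectedComponentIn Bᶜ p, R < ‖q‖ := by
    by_contra! hle
    exact hub (isBounded_iff_forall_norm_le.2 ⟨R, hle⟩)
  have hp : p ∈ connectedComponentIn Bᶜ p :=
    mem_connectedComponentIn (mem_of_not_isBounded_connectedComponentIn hub)
  have hdisj : Disjoint (connectedComponentIn Bᶜ p) A :=
    disjoint_compl_left.mono (connectedComponentIn_subset _ _) hAB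
  exact (hasContinuousLogOn_sub_iff_of_isPreconnected hA.isClosed
    isPreconnected_connectedComponentIn hdisj hp hq).2
    (hasContinuousLogOn_sub_of_norm_lt fun z hz ↦ (hR z hz).trans_lt hRq)

/-- A form of Janiszewski's separation theorem. -/
lemma not_isBounded_connectedComponentIn_compl_union {K L : Set ℂ} (hK : IsClosed K)
    (hL : IsClosed L) (hKL : Disjoint K L) {p : ℂ}
    (hKp : ¬ IsBounded (connectedComponentIn Kᶜ p))
    (hLp : ¬ IsBounded (connectedComponentIn Lᶜ p)) :
    ¬ IsBounded (connectedComponentIn (K ∪ L)ᶜ p) := by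
  intro hb
  set D := connectedComponentIn (K ∪ L)ᶜ p
  have hpD : p ∈ D := mem_connectedComponentIn <| by
    rw [compl_union]
    exact ⟨mem_of_not_isBounded_connectedComponentIn hKp,
      mem_of_not_isBounded_connectedComponentIn hLp⟩
  have hD_compact : IsCompact (frontier D) :=
    hb.isCompact_closure.of_isClosed_subset isClosed_frontier frontier_subset_closure
  have hD_sub : frontier D ⊆ K ∪ L :=
    compl_compl (K ∪ L) ▸ frontier_connectedComponentIn_subset_compl (hK.union hL).isOpen_compl
  have hD_eq : K ∩ frontier D ∪ L ∩ frontier D = frontier D := by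
    rw [← union_inter_distrib_right, inter_eq_right.2 hD_sub]
  have hK_log : HasContinuousLogOn (· - p) (K ∩ frontier D) :=
    hasContinuousLogOn_sub_of_not_isBounded (hD_compact.inter_left hK) inter_subset_left hKp
  have hL_log : HasContinuousLogOn (· - p) (L ∩ frontier D) :=
    hasContinuousLogOn_sub_of_not_isBounded (hD_compact.inter_left hL) inter_subset_left hLp
  refine not_hasContinuousLogOn_sub_frontier hb hpD (hD_eq ▸ ?_)
  exact hK_log.union hL_log (hK.inter isClosed_frontier) (hL.inter isClosed_frontier)
    (hKL.mono inter_subset_left inter_subset_left)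

lemma IsHole.subset_polyHull {K C : Set ℂ} (hC : IsHole K C) : C ⊆ polyHull K := by
  obtain ⟨⟨p, -, rfl⟩, hb⟩ := hC
  exact fun z hz ↦ .inr ⟨connectedComponentIn_subset _ _ hz, connectedComponentIn_eq hz ▸ hb⟩

lemma isHole_connectedComponentIn_compl_union {K L : Set ℂ} (hLK : L ⊆ (polyHull K)ᶜ) {p : ℂ}
    (hp : p ∉ K ∪ L) (hb : IsBounded (connectedComponentIn Kᶜ p)) :
    IsHole K (connectedComponentIn (K ∪ L)ᶜ p) := by
  have hhole : IsHole K (connectedComponentIn Kᶜ p) := ⟨⟨p, fun h ↦ hp (.inl h), rfl⟩, hb⟩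
  have hsub : connectedComponentIn Kᶜ p ⊆ (K ∪ L)ᶜ := by
    rw [compl_union]
    exact subset_inter (connectedComponentIn_subset _ _)
      (subset_compl_comm.1 (hLK.trans (compl_subset_compl.2 hhole.subset_polyHull)))
  rwa [connectedComponentIn_eq_of_subset_of_subset
    (compl_subset_compl.2 subset_union_left) hp hsub]

theorem IsHole.of_union {K L C : Set ℂ} (hK : IsClosed K) (hL : IsClosed L)
    (hKL : K ⊆ (polyHull L)ᶜ) (hLK : L ⊆ (polyHull K)ᶜ) (hC : IsHole (K ∪ L) C) :
    IsHole K C ∨ IsHole L C := by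
  obtain ⟨⟨p, hp, rfl⟩, hb⟩ := hC
  have hdisj : Disjoint K L := disjoint_left.2 fun _ hzK hzL ↦ hLK hzL (.inl hzK)
  by_cases hKp : IsBounded (connectedComponentIn Kᶜ p)
  · exact .inl (isHole_connectedComponentIn_compl_union hLK hp hKp)
  by_cases hLp : IsBounded (connectedComponentIn Lᶜ p)
  · rw [union_comm] at hp ⊢
    exact .inr (isHole_connectedComponentIn_compl_union hKL hp hLp)
  exact absurd hb (not_isBounded_connectedComponentIn_compl_union hK hL hdisj hKp hLp)

theorem omegaConvex_union_of_polyHull_disjoint_general {Ω K L : Set ℂ} (hK : IsClosed K)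
    (hL : IsClosed L) (hKconv : OmegaConvex Ω K) (hLconv : OmegaConvex Ω L)
    (hKL : K ⊆ (polyHull L)ᶜ) (hLK : L ⊆ (polyHull K)ᶜ) : OmegaConvex Ω (K ∪ L) :=
  fun C hC ↦ (hC.of_union hK hL hKL hLK).elim (hKconv C) (hLconv C)

/-- Lemma `lem-union-omega-convex`, special case of Kallin's lemma. -/
theorem omegaConvex_union_of_polyHull_disjoint
    (Ω : Set ℂ) (hΩ : IsOpen Ω) (hΩconn : IsConnected Ω)
    (K L : Set ℂ) (hK : IsCompact K) (hL : IsCompact L)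
    (hKΩ : K ⊆ Ω) (hLΩ : L ⊆ Ω)
    (hKconv : OmegaConvex Ω K) (hLconv : OmegaConvex Ω L)
    (h1 : K ⊆ (polyHull L)ᶜ) (h2 : L ⊆ (polyHull K)ᶜ) :
    OmegaConvex Ω (K ∪ L) :=
  omegaConvex_union_of_polyHull_disjoint_general hK.isClosed hL.isClosed hKconv hLconv h1 h2
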